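/- arXiv:2011.10703 — 2 statements merged into one kernel-verified Lean document; each statement's English description precedes it below -/
import Mathlib

section
/- Let α ∈ ℂ be algebraic over ℚ. Suppose that for every prime number p there exists a ring isomorphism σ : ℂ ≃+* AlgebraicClosure(ℚ_p) such that σ(α) lies in the image of the canonical map ℚ_p → AlgebraicClosure(ℚ_p). Then α is rational, i.e. α lies in the image of ℚ in ℂ. -/
/-!
Put `K = ℚ(α)`. The hypothesis embeds `K` into every `ℚ_[p]`, so `𝓞 K` has a degree-one prime
`P p` above every prime `p`. Suppose there were two embeddings `σ ≠ τ` of `K` into its normal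
closure `L`, and choose `a : 𝓞 K` with `σ a ≠ τ a`. For all but the finitely many `p` such that
`σ a - τ a` vanishes under some `𝓞 L →+* ZMod p`, a degree-one prime of `L` above `p` pulls back
along `σ` and `τ` to different maps `𝓞 K →+* ZMod p`, so `K` has a second degree-one prime
`Q p ≠ P p` above `p`.

With `J m = ∏ P q ^ e_q` for `m = ∏ q ^ e_q`, the ideals `Q p * J m` are pairwise distinct and
have norm `p * m`. About `x * ∑ 1 / p` of them have norm at most `x`, whereas `𝓞 K` has only
`O(x)` such ideals; hence `∑ 1 / p` converges over these `p`. On the other hand it diverges over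
the `p` with a degree-one prime in `L`: otherwise `∑ 1 / N(P)` over the primes of `L` converges,
as those of higher degree contribute at most a multiple of `∑ 1 / p ^ 2`; by the Euler product
`∑ 1 / N(I)` over the ideals of `𝓞 L` converges, and then the ideals of norm at most `x` number
`o(x)`, against the positive residue of the Dedekind zeta function. So `K` has only one embedding
into `L`, and `K = ℚ`.
-/

open Filter Module NumberField Polynomial Topology
open scoped ENNReal nonZeroDivisors

section WeightedSums

lemma tsum_fin_fun_prod {α : Type*} (f : α → ℝ≥0∞) (n : ℕ) :
    ∑' v : Fin n → α, ∏ i, f (v i) = (∑' a, f a) ^ n := by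
  induction n with
  | zero => simp
  | succ n ih =>
    rw [← (Fin.consEquiv fun _ ↦ α).tsum_eq, ENNReal.tsum_prod']
    simp only [Fin.consEquiv_apply, Fin.prod_univ_succ, Fin.cons_zero, Fin.cons_succ,
      ENNReal.tsum_mul_left, ENNReal.tsum_mul_right, ih, pow_succ']

lemma tsum_list_map_prod {α : Type*} (f : α → ℝ≥0∞) :
    ∑' l : List α, (l.map f).prod = (1 - ∑' a, f a)⁻¹ := by
  rw [← (List.equivSigmaTuple (α := α)).symm.tsum_eq, ENNReal.tsum_sigma', ← ENNReal.tsum_geometric]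
  simp only [List.equivSigmaTuple, Equiv.coe_fn_symm_mk, List.map_ofFn, List.prod_ofFn,
    Function.comp_apply, tsum_fin_fun_prod]

variable {M : Type*} [CommMonoid M] (w : M →* ℝ≥0∞)

lemma tsum_closure_le_inv_one_sub (S : Set M) :
    ∑' x : Submonoid.closure S, w x ≤ (1 - ∑' p : S, w p)⁻¹ := by
  let prodOf (l : List S) : Submonoid.closure S :=
    (l.map fun p : S ↦ ⟨p, Submonoid.subset_closure p.2⟩).prod
  have prodOf_surjective : prodOf.Surjective := by
    rintro ⟨x, hx⟩
    obtain ⟨l, hl, rfl⟩ := Submonoid.exists_list_of_mem_closure hx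
    lift l to List S using hl
    exact ⟨l, Subtype.ext (by simp [prodOf, Function.comp_def])⟩
  calc ∑' x : Submonoid.closure S, w x
      ≤ ∑' l : List S, w (prodOf l) :=
        ENNReal.tsum_le_tsum_comp_of_surjective prodOf_surjective fun x ↦ w x
    _ = ∑' l : List S, (l.map fun p : S ↦ w p).prod := by
        simp [prodOf, map_list_prod, Function.comp_def]
    _ = (1 - ∑' p : S, w p)⁻¹ := tsum_list_map_prod _

lemma tsum_closure_ne_top_of_tsum_lt_one {S : Set M} (hS : ∑' p : S, w p < 1) :
    ∑' x : Submonoid.closure S, w x ≠ ∞ :=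
  ne_top_of_le_ne_top (ENNReal.inv_ne_top.mpr (tsub_pos_of_lt hS).ne')
    (tsum_closure_le_inv_one_sub w S)

lemma tsum_closure_union_le (S T : Set M) :
    ∑' x : Submonoid.closure (S ∪ T), w x ≤
      (∑' x : Submonoid.closure S, w x) * ∑' y : Submonoid.closure T, w y := by
  let mulPair (z : Submonoid.closure S × Submonoid.closure T) : Submonoid.closure (S ∪ T) :=
    ⟨z.1 * z.2, Submonoid.closure_union S T ▸ Submonoid.mul_mem_sup z.1.2 z.2.2⟩
  have mulPair_surjective : mulPair.Surjective := by
    rintro ⟨x, hx⟩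
    rw [Submonoid.closure_union] at hx
    obtain ⟨y, hy, z, hz, rfl⟩ := Submonoid.mem_sup.mp hx
    exact ⟨⟨⟨y, hy⟩, ⟨z, hz⟩⟩, rfl⟩
  calc ∑' x : Submonoid.closure (S ∪ T), w x
      ≤ ∑' z, w (mulPair z) :=
        ENNReal.tsum_le_tsum_comp_of_surjective mulPair_surjective fun x ↦ w x
    _ = (∑' x : Submonoid.closure S, w x) * ∑' y : Submonoid.closure T, w y := by
        simp only [mulPair, map_mul, ENNReal.tsum_prod', ENNReal.tsum_mul_left,
          ENNReal.tsum_mul_right]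

lemma tsum_closure_finite_ne_top {F : Set M} (hF : F.Finite) (hlt : ∀ p ∈ F, w p < 1) :
    ∑' x : Submonoid.closure F, w x ≠ ∞ := by
  induction F, hF using Set.Finite.induction_on with
  | empty => exact tsum_closure_ne_top_of_tsum_lt_one w (by simp)
  | @insert p F _ _ ih =>
    have singleton_ne_top : ∑' x : Submonoid.closure {p}, w x ≠ ∞ :=
      tsum_closure_ne_top_of_tsum_lt_one w (by simpa using hlt p (F.mem_insert p))
    exact ne_top_of_le_ne_top
      (ENNReal.mul_ne_top singleton_ne_top (ih fun q hq ↦ hlt q (Set.mem_insert_of_mem p hq)))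
      (tsum_closure_union_le w {p} F)

lemma tsum_closure_ne_top {S : Set M} (hlt : ∀ p ∈ S, w p < 1) (hS : ∑' p : S, w p ≠ ∞) :
    ∑' x : Submonoid.closure S, w x ≠ ∞ := by
  obtain ⟨F, hF⟩ := ((ENNReal.tendsto_tsum_compl_atTop_zero hS).eventually
    (gt_mem_nhds zero_lt_one)).exists
  let head : Set M := (↑) '' (F : Set S)
  let tail : Set M := (↑) '' (F : Set S)ᶜ
  have head_union_tail : head ∪ tail = S := by simp [head, tail]
  have tail_lt_one : ∑' p : tail, w p < 1 := by
    rwa [tsum_image w Subtype.val_injective.injOn]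
  rw [← head_union_tail]
  refine ne_top_of_le_ne_top (ENNReal.mul_ne_top ?_ ?_) (tsum_closure_union_le w head tail)
  · exact tsum_closure_finite_ne_top w (F.finite_toSet.image _) fun p hp ↦
      hlt p (head_union_tail ▸ Or.inl hp)
  · exact tsum_closure_ne_top_of_tsum_lt_one w tail_lt_one

lemma mem_closure_prime_of_ne_zero {M : Type*} [CommMonoidWithZero M]
    [UniqueFactorizationMonoid M] [Subsingleton Mˣ] {x : M} (hx : x ≠ 0) :
    x ∈ Submonoid.closure {p : M | Prime p} := by
  induction x using UniqueFactorizationMonoid.induction_on_prime with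
  | h₁ => exact absurd rfl hx
  | h₂ x hunit => exact hunit.eq_one ▸ one_mem _
  | h₃ x p _ hp ih =>
    exact mul_mem (Submonoid.subset_closure hp) (ih (right_ne_zero_of_mul hx))

lemma tsum_comp_le_mul_tsum_of_encard_fiber_le {α β : Type*} {f : α → β} {n : ℕ∞}
    (hf : ∀ b, (f ⁻¹' {b}).encard ≤ n) (g : β → ℝ≥0∞) :
    ∑' a, g (f a) ≤ n * ∑' b, g b := by
  rw [← ENNReal.tsum_fiberwise (fun a ↦ g (f a)) f, ← ENNReal.tsum_mul_left]
  refine ENNReal.tsum_le_tsum fun b ↦ ?_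
  calc ∑' a : f ⁻¹' {b}, g (f a) = ∑' _ : f ⁻¹' {b}, g b := tsum_congr fun a ↦ by rw [a.2]
    _ = (f ⁻¹' {b}).encard * g b := ENNReal.tsum_set_const ..
    _ ≤ n * g b := by gcongr; exact hf b

end WeightedSums

section Counting

lemma tendsto_natCard_le_div_atTop_zero {ι : Type*} {N : ι → ℕ} (hpos : ∀ i, 0 < N i)
    (hN : Summable fun i ↦ (N i : ℝ)⁻¹) :
    Tendsto (fun n : ℕ ↦ (Nat.card {i // N i ≤ n} : ℝ) / n) atTop (𝓝 0) := by
  let term (n : ℕ) (i : ι) : ℝ := {i | N i ≤ n}.indicator (fun _ ↦ (n : ℝ)⁻¹) i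
  have term_le (n : ℕ) (i : ι) : ‖term n i‖ ≤ (N i : ℝ)⁻¹ := by
    have := hpos i
    by_cases h : N i ≤ n
    · simpa [term, h] using inv_anti₀ (by positivity) (Nat.cast_le.mpr h)
    · simp [term, h]
  have tendsto_term (i : ι) : Tendsto (term · i) atTop (𝓝 0) := by
    refine (tendsto_inv_atTop_nhds_zero_nat (𝕜 := ℝ)).congr' ?_
    filter_upwards [eventually_ge_atTop (N i)] with n hn
    simp [term, hn]
  have tsum_term (n : ℕ) : ∑' i, term n i = (Nat.card {i // N i ≤ n} : ℝ) / n := by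
    rw [← tsum_subtype, tsum_const, nsmul_eq_mul, div_eq_mul_inv]
    rfl
  simpa [tsum_term] using
    tendsto_tsum_of_dominated_convergence hN tendsto_term (Eventually.of_forall term_le)

lemma tsum_inv_le_of_tendsto_natCard_le_div {ι σ : Type*} {N : ι → ℕ} {a : σ → ℕ} {κ : ℝ}
    (hfin : ∀ n, Finite {i // N i ≤ n})
    (hκ : Tendsto (fun n : ℕ ↦ (Nat.card {i // N i ≤ n} : ℝ) / n) atTop (𝓝 κ))
    (ha : ∀ s, a s ≠ 0) {f : σ × ℕ+ → ι} (hf : f.Injective)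
    (hN : ∀ s m, N (f (s, m)) = a s * m) :
    ∑' s, (a s : ℝ≥0∞)⁻¹ ≤ ENNReal.ofReal κ := by
  have sum_div_le (F : Finset σ) (n : ℕ) : ∑ s ∈ F, n / a s ≤ Nat.card {i // N i ≤ n} := by
    let value (z : Σ s : F, Fin (n / a s)) : {i // N i ≤ n} :=
      ⟨f (z.1, z.2.1.succPNat), by
        rw [hN]
        exact (Nat.mul_le_mul_left _ z.2.2).trans (Nat.mul_div_le n _)⟩
    have value_injective : value.Injective := by
      rintro ⟨s, k⟩ ⟨t, l⟩ h
      obtain ⟨hst, hkl⟩ := Prod.ext_iff.mp (hf (congrArg Subtype.val h))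
      obtain rfl : s = t := Subtype.ext hst
      obtain rfl : k = l := Fin.ext (Nat.succPNat_injective hkl)
      rfl
    simpa [Nat.card_sigma, Finset.sum_attach F fun s ↦ n / a s] using
      Nat.card_le_card_of_injective value value_injective
  have tendsto_div (s : σ) :
      Tendsto (fun n : ℕ ↦ ((n / a s : ℕ) : ℝ) / n) atTop (𝓝 (a s : ℝ)⁻¹) := by
    refine ((tendsto_nat_floor_mul_div_atTop (inv_nonneg.mpr (a s).cast_nonneg)).comp
      (tendsto_natCast_atTop_atTop (R := ℝ))).congr fun n ↦ ?_
    rw [Function.comp_apply, inv_mul_eq_div, Nat.floor_div_eq_div]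
  rw [ENNReal.tsum_eq_iSup_sum]
  refine iSup_le fun F ↦ ?_
  calc ∑ s ∈ F, (a s : ℝ≥0∞)⁻¹ = ENNReal.ofReal (∑ s ∈ F, (a s : ℝ)⁻¹) := by
        rw [ENNReal.ofReal_sum_of_nonneg fun s _ ↦ by positivity]
        refine Finset.sum_congr rfl fun s _ ↦ ?_
        rw [ENNReal.ofReal_inv_of_pos (Nat.cast_pos.mpr (ha s).pos), ENNReal.ofReal_natCast]
    _ ≤ ENNReal.ofReal κ := by
        refine ENNReal.ofReal_le_ofReal
          (le_of_tendsto_of_tendsto' (tendsto_finsetSum F fun s _ ↦ tendsto_div s) hκ fun n ↦ ?_)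
        rw [← Finset.sum_div]
        gcongr
        exact_mod_cast sum_div_le F n

end Counting

section FactorLift

variable {M : Type*} [CommMonoidWithZero M]

/-- The completely multiplicative extension to `ℕ` of a family `P` indexed by the primes:
`m = ∏ q ^ e_q` is sent to `∏ P q ^ e_q`. The junk value at `m = 0` is `1`. -/
def factorLift (P : ℕ → M) (m : ℕ) : M := (m.primeFactorsList.map P).prod

variable {P Q : ℕ → M} {norm : M →* ℕ}

lemma map_factorLift (hP : ∀ q, q.Prime → norm (P q) = q) {m : ℕ} (hm : m ≠ 0) :
    norm (factorLift P m) = m := by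
  have map_eq : m.primeFactorsList.map (norm ∘ P) = m.primeFactorsList.map id :=
    List.map_congr_left fun q hq ↦ hP q (Nat.prime_of_mem_primeFactorsList hq)
  rw [factorLift, map_list_prod, List.map_map, map_eq, List.map_id, Nat.prod_primeFactorsList hm]

variable [IsCancelMulZero M] [Subsingleton Mˣ]

lemma mul_factorLift_injective (hP : ∀ q, q.Prime → Prime (P q) ∧ norm (P q) = q) {S : Set ℕ}
    (hS : ∀ p ∈ S, p ≠ 0) (hQ : ∀ p ∈ S, Prime (Q p) ∧ norm (Q p) = p)
    (hQP : ∀ p ∈ S, Q p ≠ P p) :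
    Function.Injective fun z : S × ℕ+ ↦ Q z.1 * factorLift P z.2 := by
  rintro ⟨⟨p, hp⟩, m⟩ ⟨⟨q, hq⟩, k⟩ (heq : Q p * factorLift P m = Q q * factorLift P k)
  have eq_of_dvd {x y : M} (hx : Prime x) (hy : Prime y) (hxy : x ∣ y) : x = y :=
    associated_iff_eq.mp (hx.associated_of_dvd hy hxy)
  obtain rfl : p = q := by
    rcases (hQ p hp).1.dvd_or_dvd (Dvd.intro _ heq) with hdvd | hdvd
    · rw [← (hQ p hp).2, eq_of_dvd (hQ p hp).1 (hQ q hq).1 hdvd, (hQ q hq).2]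
    · obtain ⟨_, hmem, hdvd⟩ := (hQ p hp).1.dvd_prod_iff.mp hdvd
      obtain ⟨r, hr, rfl⟩ := List.mem_map.mp hmem
      have hPr := hP r (Nat.prime_of_mem_primeFactorsList hr)
      have hQr : Q p = P r := eq_of_dvd (hQ p hp).1 hPr.1 hdvd
      obtain rfl : p = r := by rw [← (hQ p hp).2, hQr, hPr.2]
      exact absurd hQr (hQP p hp)
  have norm_eq := congrArg norm heq
  rw [map_mul, map_mul, (hQ p hp).2, map_factorLift (fun r hr ↦ (hP r hr).2) m.ne_zero,
    map_factorLift (fun r hr ↦ (hP r hr).2) k.ne_zero] at norm_eq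
  rw [PNat.coe_injective (Nat.eq_of_mul_eq_mul_left (hS p hp).pos norm_eq)]

end FactorLift

section IdealNorms

open Ideal (absNorm)

lemma encard_primesOver_le_finrank {R : Type*} (S : Type*) [CommRing R] [IsDomain R] [CommRing S]
    [Algebra R S] [Module.Finite R S] [Module.Flat R S] (p : Ideal R) :
    (p.primesOver S).encard ≤ finrank R S := by
  obtain hempty | ⟨P₀, hP₀, hP₀p⟩ := (p.primesOver S).eq_empty_or_nonempty
  · simp [hempty]
  have : p.IsPrime := hP₀p.over ▸ inferInstance
  have finite_primesOver : (p.primesOver S).Finite := Algebra.QuasiFinite.finite_primesOver p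
  have : Fintype (p.primesOver S) := finite_primesOver.fintype
  rw [finite_primesOver.encard_eq_coe_toFinset_card, Set.Finite.card_toFinset, Nat.cast_le,
    ← Ideal.sum_ramification_inertia_eq_finrank p, Fintype.card_eq_sum_ones]
  exact Finset.sum_le_sum fun P _ ↦
    have := P.2.1
    Nat.mul_pos (Ideal.ramificationIdx_pos ..) (Ideal.inertiaDeg_pos ..)

lemma prime_absNorm_under_of_prime {R : Type*} [CommRing R] [IsDedekindDomain R]
    [Algebra.IsIntegral ℤ R] {P : Ideal R} (hP : Prime P) : (absNorm (P.under ℤ)).Prime :=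
  have : P.IsPrime := Ideal.isPrime_of_prime hP
  have : NeZero P := ⟨hP.ne_zero⟩
  Nat.absNorm_under_prime P

lemma encard_prime_absNorm_under_le_finrank {R : Type*} [CommRing R] [IsDedekindDomain R]
    [Module.Finite ℤ R] [Module.Flat ℤ R] (p : ℕ) :
    ((fun P : {P : Ideal R | Prime P} ↦ absNorm (P.1.under ℤ)) ⁻¹' {p}).encard ≤ finrank ℤ R := by
  refine le_trans ?_ (encard_primesOver_le_finrank R (Ideal.span {(p : ℤ)}))
  rw [← Subtype.val_injective.encard_image]
  refine Set.encard_le_encard ?_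
  rintro _ ⟨P, rfl, rfl⟩
  exact ⟨Ideal.isPrime_of_prime P.2, inferInstance⟩

section Ring

variable (R : Type*) [CommRing R] [IsDedekindDomain R] [Module.Free ℤ R] [Module.Finite ℤ R]

/-- The completely multiplicative weight `I ↦ N(I)⁻¹` on ideals; the zero ideal has weight `∞`. -/
noncomputable def invAbsNorm : Ideal R →* ℝ≥0∞ where
  toFun I := (absNorm I : ℝ≥0∞)⁻¹
  map_one' := by simp
  map_mul' I J := by
    rw [map_mul, Nat.cast_mul]
    exact ENNReal.mul_inv (.inr (ENNReal.natCast_ne_top _)) (.inl (ENNReal.natCast_ne_top _))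

variable {R}

lemma one_lt_absNorm_of_prime {P : Ideal R} (hP : Prime P) : 1 < absNorm P := by
  have norm_ne_zero : absNorm P ≠ 0 := Ideal.absNorm_eq_zero_iff.not.mpr hP.ne_zero
  have norm_ne_one : absNorm P ≠ 1 := by simpa using (Ideal.isPrime_of_prime hP).ne_top
  lia

lemma invAbsNorm_lt_one_of_prime {P : Ideal R} (hP : Prime P) : invAbsNorm R P < 1 :=
  ENNReal.inv_lt_one.mpr (Nat.one_lt_cast.mpr (one_lt_absNorm_of_prime hP))

lemma prime_of_prime_absNorm {P : Ideal R} (hP : (absNorm P).Prime) : Prime P :=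
  Ideal.prime_of_isPrime (Ideal.absNorm_eq_zero_iff.not.mp hP.ne_zero)
    (Ideal.isPrime_of_irreducible_absNorm hP)

lemma absNorm_eq_or_sq_le_of_prime {P : Ideal R} (hP : Prime P) :
    absNorm P = absNorm (P.under ℤ) ∨ absNorm (P.under ℤ) ^ 2 ≤ absNorm P := by
  have hp := prime_absNorm_under_of_prime hP
  have one_lt := one_lt_absNorm_of_prime hP
  rw [Ideal.absNorm_eq_pow_inertiaDeg' P hp] at one_lt ⊢
  match (Ideal.span {(absNorm (P.under ℤ) : ℤ)}).inertiaDeg' P, one_lt with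
  | 1, _ => exact .inl (pow_one _)
  | f + 2, _ => exact .inr (Nat.pow_le_pow_right hp.pos le_add_self)

end Ring

lemma absNorm_ker_ringHom_zmod {R : Type*} [CommRing R] [IsDedekindDomain R] [Module.Free ℤ R]
    {n : ℕ} (φ : R →+* ZMod n) : absNorm (RingHom.ker φ) = n := by
  rw [Ideal.absNorm_apply, Submodule.cardQuot_apply, Nat.card_congr
    (RingHom.quotientKerEquivOfSurjective (ZMod.ringHom_surjective φ)).toEquiv, Nat.card_zmod]

lemma nonempty_ringHom_zmod_absNorm {R : Type*} [CommRing R] [IsDedekindDomain R]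
    [Module.Free ℤ R] {P : Ideal R} (hP : (absNorm P).Prime) :
    Nonempty (R →+* ZMod (absNorm P)) := by
  have card_quot : Nat.card (R ⧸ P) = absNorm P := by
    rw [Ideal.absNorm_apply, Submodule.cardQuot_apply]
  have : Finite (R ⧸ P) := Nat.finite_of_card_ne_zero (card_quot ▸ hP.ne_zero)
  have : Fintype (R ⧸ P) := Fintype.ofFinite _
  exact ⟨(ZMod.ringEquivOfPrime (R ⧸ P) hP
    (Nat.card_eq_fintype_card.symm.trans card_quot)).symm.toRingHom.comp (Ideal.Quotient.mk P)⟩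

end IdealNorms

lemma tsum_prime_inv_sq_ne_top : ∑' p : {p : ℕ | p.Prime}, ((p : ℝ≥0∞) ^ 2)⁻¹ ≠ ∞ := by
  have summable_inv_sq := (Real.summable_nat_pow_inv.mpr one_lt_two).subtype {p : ℕ | p.Prime}
  refine ne_of_eq_of_ne (tsum_congr fun p ↦ ?_) summable_inv_sq.tsum_ofReal_ne_top
  have : (0 : ℝ) < p := Nat.cast_pos.mpr p.2.pos
  rw [Function.comp_apply, ENNReal.ofReal_inv_of_pos (by positivity),
    ENNReal.ofReal_pow (by positivity), ENNReal.ofReal_natCast]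

section NumberField

open Ideal (absNorm)

variable (K : Type*) [Field K] [NumberField K]

lemma tsum_nonZeroDivisors_invAbsNorm_eq_top :
    ∑' I : (Ideal (𝓞 K))⁰, invAbsNorm (𝓞 K) I = ∞ := by
  by_contra hfin
  have tendsto_zero : Tendsto (fun n : ℕ ↦
      (Nat.card {I : (Ideal (𝓞 K))⁰ // absNorm (I : Ideal (𝓞 K)) ≤ n} : ℝ) / n) atTop (𝓝 0) := by
    refine tendsto_natCard_le_div_atTop_zero Ideal.absNorm_pos_of_nonZeroDivisors ?_
    simpa [invAbsNorm] using ENNReal.summable_toReal hfin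
  have tendsto_residue :=
    (NumberField.Ideal.tendsto_norm_le_div_atTop₀ K).comp (tendsto_natCast_atTop_atTop (R := ℝ))
  simp only [Function.comp_def, Nat.cast_le] at tendsto_residue
  exact (dedekindZeta_residue_pos K).ne' (tendsto_nhds_unique tendsto_residue tendsto_zero)

lemma tsum_prime_invAbsNorm_eq_top :
    ∑' P : {P : Ideal (𝓞 K) | Prime P}, invAbsNorm (𝓞 K) P = ∞ := by
  by_contra hfin
  refine tsum_closure_ne_top (invAbsNorm (𝓞 K)) (fun P hP ↦ invAbsNorm_lt_one_of_prime hP) hfin ?_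
  rw [eq_top_iff, ← tsum_nonZeroDivisors_invAbsNorm_eq_top K]
  exact ENNReal.tsum_mono_subtype (invAbsNorm (𝓞 K)) (s := (Ideal (𝓞 K))⁰)
    fun I hI ↦ mem_closure_prime_of_ne_zero (nonZeroDivisors.ne_zero hI)

theorem tsum_inv_prime_of_nonempty_ringHom_zmod_eq_top :
    ∑' p : {p : ℕ | p.Prime ∧ Nonempty (𝓞 K →+* ZMod p)}, (p : ℝ≥0∞)⁻¹ = ∞ := by
  set S : Set ℕ := {p | p.Prime ∧ Nonempty (𝓞 K →+* ZMod p)}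
  let g (p : ℕ) : ℝ≥0∞ :=
    S.indicator (fun p ↦ (p : ℝ≥0∞)⁻¹) p +
      {p : ℕ | p.Prime}.indicator (fun p ↦ ((p : ℝ≥0∞) ^ 2)⁻¹) p
  have tsum_g : ∑' p, g p =
      ∑' p : S, (p : ℝ≥0∞)⁻¹ + ∑' p : {p : ℕ | p.Prime}, ((p : ℝ≥0∞) ^ 2)⁻¹ := by
    rw [ENNReal.tsum_add, ← tsum_subtype, ← tsum_subtype]
  have invAbsNorm_le_g (P : {P : Ideal (𝓞 K) | Prime P}) :
      invAbsNorm (𝓞 K) P ≤ g (absNorm (P.1.under ℤ)) := by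
    have hp := prime_absNorm_under_of_prime P.2
    obtain heq | hle := absNorm_eq_or_sq_le_of_prime P.2
    · have hmem : absNorm (P.1.under ℤ) ∈ S :=
        ⟨hp, heq ▸ nonempty_ringHom_zmod_absNorm (heq ▸ hp)⟩
      refine le_add_right ?_
      rw [Set.indicator_of_mem hmem, ← heq]
      rfl
    · refine le_add_left ?_
      rw [Set.indicator_of_mem (Set.mem_ofPred.mpr hp)]
      exact ENNReal.inv_le_inv.mpr (mod_cast hle)
  have top_le : ∞ ≤ finrank ℤ (𝓞 K) * ∑' p, g p := by
    rw [← tsum_prime_invAbsNorm_eq_top K]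
    exact (ENNReal.tsum_le_tsum invAbsNorm_le_g).trans
      (tsum_comp_le_mul_tsum_of_encard_fiber_le encard_prime_absNorm_under_le_finrank g)
  by_contra hfin
  refine ENNReal.mul_ne_top (ENNReal.natCast_ne_top _) ?_ (top_le_iff.mp top_le)
  exact tsum_g ▸ ENNReal.add_ne_top.mpr ⟨hfin, tsum_prime_inv_sq_ne_top⟩

end NumberField

section DegreeOnePrimes

open Ideal (absNorm)

lemma finite_setOf_ringHom_zmod_apply_eq_zero {R : Type*} [CommRing R] [IsDomain R]
    [Algebra.IsIntegral ℤ R] {x : R} (hx : x ≠ 0) :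
    {p : ℕ | ∃ φ : R →+* ZMod p, φ x = 0}.Finite := by
  obtain ⟨q, coeff_ne_zero, aeval_eq_zero⟩ :=
    (Algebra.IsIntegral.isIntegral (R := ℤ) x).isAlgebraic.exists_nonzero_coeff_and_aeval_eq_zero
      (mem_nonZeroDivisors_of_ne_zero hx)
  refine (Nat.divisors (q.coeff 0).natAbs).finite_toSet.subset ?_
  rintro p ⟨φ, hφ⟩
  rw [Finset.mem_coe, Nat.mem_divisors, ← Int.natCast_dvd, ← ZMod.intCast_zmod_eq_zero_iff_dvd]
  refine ⟨?_, Int.natAbs_ne_zero.mpr coeff_ne_zero⟩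
  have aeval_map_eq_zero : aeval (φ x) q = 0 := by
    rw [← φ.toIntAlgHom_apply, aeval_algHom_apply, aeval_eq_zero, map_zero]
  simpa [hφ, aeval_def, eval₂_at_zero] using aeval_map_eq_zero

lemma finite_setOf_nonempty_and_subsingleton_ringHom_zmod {R S : Type*} [CommRing R] [CommRing S]
    [IsDomain S] [Algebra.IsIntegral ℤ S] {σ τ : R →+* S} (hne : σ ≠ τ) :
    {p : ℕ | Nonempty (S →+* ZMod p) ∧ Subsingleton (R →+* ZMod p)}.Finite := by
  obtain ⟨a, ha⟩ := DFunLike.ne_iff.mp hne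
  refine (finite_setOf_ringHom_zmod_apply_eq_zero (sub_ne_zero.mpr ha)).subset ?_
  rintro p ⟨⟨φ⟩, hsub⟩
  refine ⟨φ, ?_⟩
  rw [map_sub, sub_eq_zero]
  exact DFunLike.congr_fun (Subsingleton.elim (φ.comp σ) (φ.comp τ)) a

lemma exists_absNorm_eq_and_ne {R : Type*} [CommRing R] [IsDedekindDomain R] [Module.Free ℤ R]
    {n : ℕ} [Nontrivial (R →+* ZMod n)] (P : Ideal R) : ∃ Q : Ideal R, absNorm Q = n ∧ Q ≠ P := by
  obtain ⟨φ, ψ, hne⟩ := exists_pair_ne (R →+* ZMod n)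
  have ker_ne : RingHom.ker φ ≠ RingHom.ker ψ := fun h ↦ hne (ZMod.ringHom_eq_of_ker_eq φ ψ h)
  obtain h | h := ker_ne.ne_or_ne P
  · exact ⟨_, absNorm_ker_ringHom_zmod φ, h⟩
  · exact ⟨_, absNorm_ker_ringHom_zmod ψ, h⟩

theorem tsum_inv_prime_of_nontrivial_ringHom_zmod_ne_top {K : Type*} [Field K] [NumberField K]
    (hK : ∀ p : ℕ, p.Prime → Nonempty (𝓞 K →+* ZMod p)) :
    ∑' p : {p : ℕ | p.Prime ∧ Nontrivial (𝓞 K →+* ZMod p)}, (p : ℝ≥0∞)⁻¹ ≠ ∞ := by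
  have exists_absNorm_eq (p : ℕ) (hp : p.Prime) : ∃ P : Ideal (𝓞 K), absNorm P = p :=
    (hK p hp).elim fun φ ↦ ⟨_, absNorm_ker_ringHom_zmod φ⟩
  choose! P norm_P using exists_absNorm_eq
  set S : Set ℕ := {p | p.Prime ∧ Nontrivial (𝓞 K →+* ZMod p)}
  have exists_second_prime (p : ℕ) (hp : p ∈ S) :
      ∃ Q : Ideal (𝓞 K), absNorm Q = p ∧ Q ≠ P p :=
    have := hp.2
    exists_absNorm_eq_and_ne (P p)
  choose! Q norm_Q Q_ne_P using exists_second_prime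
  have prime_of_norm {I : Ideal (𝓞 K)} {p : ℕ} (hp : p.Prime) (hI : absNorm I = p) : Prime I :=
    prime_of_prime_absNorm (hI ▸ hp)
  have tendsto_residue :=
    (NumberField.Ideal.tendsto_norm_le_div_atTop K).comp (tendsto_natCast_atTop_atTop (R := ℝ))
  simp only [Function.comp_def, Nat.cast_le] at tendsto_residue
  have injective_mul : Function.Injective fun z : S × ℕ+ ↦ Q z.1 * factorLift P z.2 :=
    mul_factorLift_injective (norm := absNorm.toMonoidHom)
      (fun p hp ↦ ⟨prime_of_norm hp (norm_P p hp), norm_P p hp⟩) (fun p hp ↦ hp.1.ne_zero)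
      (fun p hp ↦ ⟨prime_of_norm hp.1 (norm_Q p hp), norm_Q p hp⟩) Q_ne_P
  refine ne_top_of_le_ne_top ENNReal.ofReal_ne_top
    (tsum_inv_le_of_tendsto_natCard_le_div (fun n ↦ Ideal.finite_setOfPred_absNorm_le n)
      tendsto_residue (fun p ↦ p.2.1.ne_zero) injective_mul fun p m ↦ ?_)
  rw [map_mul, norm_Q p p.2]
  exact congrArg _ (map_factorLift (norm := absNorm.toMonoidHom) norm_P m.ne_zero)

theorem subsingleton_ringHom_of_forall_nonempty_ringHom_zmod {K : Type*} [Field K] [NumberField K]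
    (hK : ∀ p : ℕ, p.Prime → Nonempty (𝓞 K →+* ZMod p)) (L : Type*) [Field L] [NumberField L] :
    Subsingleton (K →+* L) := by
  refine ⟨fun σ τ ↦ ?_⟩
  by_contra hne
  have mapRingHom_ne : RingOfIntegers.mapRingHom σ ≠ RingOfIntegers.mapRingHom τ := fun h ↦
    hne <| IsFractionRing.ringHom_ext (A := 𝓞 K) fun a ↦
      congrArg (algebraMap (𝓞 L) L) (DFunLike.congr_fun h a)
  set exceptional : Set ℕ := {p | Nonempty (𝓞 L →+* ZMod p) ∧ Subsingleton (𝓞 K →+* ZMod p)}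
  have exceptional_finite : exceptional.Finite :=
    finite_setOf_nonempty_and_subsingleton_ringHom_zmod mapRingHom_ne
  have subset_union : {p : ℕ | p.Prime ∧ Nonempty (𝓞 L →+* ZMod p)} ⊆
      {p | p.Prime ∧ Nontrivial (𝓞 K →+* ZMod p)} ∪ {p ∈ exceptional | p.Prime} := by
    rintro p ⟨hp, hL⟩
    obtain hsub | hnon := subsingleton_or_nontrivial (𝓞 K →+* ZMod p)
    · exact .inr ⟨⟨hL, hsub⟩, hp⟩
    · exact .inl ⟨hp, hnon⟩
  have exceptional_ne_top : ∑' p : {p ∈ exceptional | p.Prime}, (p : ℝ≥0∞)⁻¹ ≠ ∞ := by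
    have : Finite {p ∈ exceptional | p.Prime} := (exceptional_finite.sep _).to_subtype
    have : Fintype {p ∈ exceptional | p.Prime} := Fintype.ofFinite _
    rw [tsum_fintype]
    refine ENNReal.sum_ne_top.mpr fun p _ ↦ ?_
    exact ENNReal.inv_ne_top.mpr (Nat.cast_ne_zero.mpr p.2.2.ne_zero)
  refine ENNReal.add_ne_top.mpr
    ⟨tsum_inv_prime_of_nontrivial_ringHom_zmod_ne_top hK, exceptional_ne_top⟩ ?_
  rw [eq_top_iff, ← tsum_inv_prime_of_nonempty_ringHom_zmod_eq_top L]
  exact (ENNReal.tsum_mono_subtype (fun p : ℕ ↦ (p : ℝ≥0∞)⁻¹) subset_union).trans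
    (ENNReal.tsum_union_le (fun p : ℕ ↦ (p : ℝ≥0∞)⁻¹) _ _)

theorem finrank_eq_one_of_forall_nonempty_ringHom_zmod {K : Type*} [Field K] [NumberField K]
    (hK : ∀ p : ℕ, p.Prime → Nonempty (𝓞 K →+* ZMod p)) : finrank ℚ K = 1 := by
  let L := IntermediateField.normalClosure ℚ K (AlgebraicClosure K)
  have : IsAlgClosure ℚ (AlgebraicClosure K) := IsAlgClosure.ofAlgebraic ℚ K _
  have : Normal ℚ (AlgebraicClosure K) := IsAlgClosure.normal ℚ _
  have : NumberField L := ⟨⟩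
  have := subsingleton_ringHom_of_forall_nonempty_ringHom_zmod hK L
  have : Subsingleton (K →ₐ[ℚ] L) := AlgHom.coe_ringHom_injective.subsingleton
  have splits (x : K) : ((minpoly ℚ x).map (algebraMap ℚ L)).Splits := by
    rw [← minpoly.algebraMap_eq (algebraMap K L).injective x]
    exact (normalClosure.normal ℚ K (AlgebraicClosure K)).splits _
  refine le_antisymm ?_ finrank_pos
  rw [← AlgHom.natCard_of_splits ℚ K L splits]
  exact Finite.card_le_one_iff_subsingleton.mpr this

end DegreeOnePrimes

section Padic

open IntermediateField

lemma nonempty_ringHom_zmod_of_padic {R : Type*} [CommRing R] [Algebra.IsIntegral ℤ R] {p : ℕ}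
    [Fact p.Prime] (f : R →+* ℚ_[p]) : Nonempty (R →+* ZMod p) := by
  have mem_subring (x : R) : f x ∈ PadicInt.subring p := by
    have hint : IsIntegral ℤ_[p] (f x) :=
      (map_isIntegral_int f (Algebra.IsIntegral.isIntegral x)).tower_top
    obtain ⟨y, hy⟩ := IsIntegrallyClosed.isIntegral_iff.mp hint
    exact hy ▸ y.2
  exact ⟨PadicInt.toZMod.comp (f.codRestrict (PadicInt.subring p) mem_subring)⟩

lemma nonempty_algHom_adjoin_simple_of_apply_mem_range {k F E Ω : Type*} [Field k] [Field F]
    [Field E] [Field Ω] [Algebra k F] [Algebra k E] [Algebra k Ω] [Algebra E Ω]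
    [IsScalarTower k E Ω] {α : F} (hα : IsIntegral k α) (σ : F →ₐ[k] Ω)
    (h : σ α ∈ Set.range (algebraMap E Ω)) : Nonempty (k⟮α⟯ →ₐ[k] E) := by
  obtain ⟨a, ha⟩ := h
  have aeval_eq_zero : aeval a (minpoly k α) = 0 := by
    apply (algebraMap E Ω).injective
    rw [← aeval_algebraMap_apply, ha, aeval_algHom_apply, minpoly.aeval, map_zero, map_zero]
  refine ⟨(adjoin.powerBasis hα).lift a ?_⟩
  rwa [adjoin.powerBasis_gen, minpoly_gen]

theorem stmt_1_general {F : Type*} [Field F] [CharZero F] (α : F) (halg : IsAlgebraic ℚ α)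
    (h : ∀ (p : ℕ) [Fact p.Prime],
      ∃ σ : F →+* AlgebraicClosure ℚ_[p],
        σ α ∈ Set.range (algebraMap ℚ_[p] (AlgebraicClosure ℚ_[p]))) :
    α ∈ Set.range ((↑) : ℚ → F) := by
  have hint : IsIntegral ℚ α := halg.isIntegral
  have : FiniteDimensional ℚ ℚ⟮α⟯ := adjoin.finiteDimensional hint
  have : NumberField ℚ⟮α⟯ := ⟨⟩
  have degree_one_prime (p : ℕ) (hp : p.Prime) : Nonempty (𝓞 ℚ⟮α⟯ →+* ZMod p) := by
    have : Fact p.Prime := ⟨hp⟩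
    obtain ⟨σ, hσ⟩ := h p
    obtain ⟨f⟩ := nonempty_algHom_adjoin_simple_of_apply_mem_range hint σ.toRatAlgHom hσ
    exact nonempty_ringHom_zmod_of_padic (f.toRingHom.comp (algebraMap (𝓞 ℚ⟮α⟯) ℚ⟮α⟯))
  have mem_bot : α ∈ (⊥ : IntermediateField ℚ F) :=
    finrank_adjoin_simple_eq_one_iff.mp
      (finrank_eq_one_of_forall_nonempty_ringHom_zmod degree_one_prime)
  exact mem_bot

end Padic

/-- One-dimensional case of Claim 2.4: an algebraic number which, for every prime `p`,
becomes `ℚ_p`-rational under some field isomorphism `ℂ ≃ ℚ̄_p`, is rational. -/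
theorem stmt_1 (α : ℂ) (halg : IsAlgebraic ℚ α)
    (h : ∀ (p : ℕ) [Fact p.Prime],
      ∃ σ : ℂ ≃+* AlgebraicClosure ℚ_[p],
        σ α ∈ Set.range (algebraMap ℚ_[p] (AlgebraicClosure ℚ_[p]))) :
    α ∈ Set.range ((↑) : ℚ → ℂ) :=
  stmt_1_general α halg fun p _ ↦ (h p).imp' RingEquiv.toRingHom fun _ ↦ id
end

section
/- Let f ∈ ℤ[X] be a monic polynomial that is irreducible (over ℤ, equivalently over ℚ). If for every prime number p the reduction of f modulo p has a root in ℤ/pℤ, then f has degree 1. -/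
/-!
Apart from finitely many `p`, the roots of `f` modulo `p` correspond to ideals of norm `p` in the
field `K = ℚ[X]/(f)`, so the hypothesis says that almost every prime is the norm of an ideal of
`𝓞 K`. Choose such ideals `P p` and extend multiplicatively to ideals `J n` of norm `n`, for `n`
prime to the product `m` of the exceptions, for instance `n ≡ 1 mod m`. If `Q p ≠ P p` is a second
ideal of norm `p`, then the ideals `Q p * J n` are distinct for distinct pairs `(p, n)`. As only
`O(N)` ideals have norm at most `N`, the sum of `1 / p` over the primes `p` for which `Q p` exists
is finite.

On the other hand, if `deg f ≥ 2`, the splitting field `L` of `f` contains two distinct roots, which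
stay distinct modulo almost every prime ideal. So if `𝓞 L` has an ideal of norm `p`, then `f` has
two roots modulo `p` and `𝓞 K` two ideals of norm `p`. But the sum of `1 / p` over the norms `p` of
degree-one primes of `L` diverges: otherwise the Euler product would bound the sum of the inverse
norms of all ideals of `𝓞 L`, which is infinite because the number of ideals of norm at most `x`
grows linearly in `x`.
-/

open Filter Ideal Module NumberField Polynomial Topology nonZeroDivisors

theorem tendsto_card_le_div_atTop_of_summable_inv {ι : Type*} {w : ι → ℝ} (hw : ∀ i, 0 < w i)
    (h : Summable fun i => (w i)⁻¹) :
    Tendsto (fun x : ℝ => (Nat.card {i // w i ≤ x} : ℝ) / x) atTop (𝓝 0) := by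
  have hlim : Tendsto (fun x : ℝ => ∑' i, {i | w i ≤ x}.indicator (fun _ => x⁻¹) i) atTop
      (𝓝 (∑' _ : ι, (0 : ℝ))) := by
    refine tendsto_tsum_of_dominated_convergence h (fun i => ?_) ?_
    · refine tendsto_inv_atTop_zero.congr' ?_
      filter_upwards [eventually_ge_atTop (w i)] with x hx
      exact (Set.indicator_of_mem (s := {i | w i ≤ x}) hx fun _ => x⁻¹).symm
    · filter_upwards [eventually_ge_atTop 0] with x hx i
      rw [norm_indicator_eq_indicator_norm, Real.norm_of_nonneg (inv_nonneg.mpr hx)]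
      exact Set.indicator_apply_le' (fun hi => inv_anti₀ (hw i) hi)
        fun _ => (inv_pos.mpr (hw i)).le
  rw [tsum_zero] at hlim
  refine hlim.congr fun x => ?_
  rw [← tsum_subtype, tsum_const, nsmul_eq_mul, div_eq_mul_inv]
  rfl

theorem summable_comp_of_card_fiber_le {ι κ : Type*} {g : κ → ℝ} (hg : Summable g)
    (hg0 : ∀ k, 0 ≤ g k) {π : ι → κ} {d : ℕ}
    (hπ : ∀ k, ∀ S : Finset ι, (∀ i ∈ S, π i = k) → S.card ≤ d) :
    Summable (g ∘ π) := by
  classical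
  refine summable_of_sum_le (c := d * ∑' k, g k) (fun i => hg0 (π i)) fun S => ?_
  calc ∑ i ∈ S, g (π i)
      = ∑ k ∈ S.image π, (S.filter (π · = k)).card * g k := by
        simp only [Finset.sum_comp g π, nsmul_eq_mul]
    _ ≤ ∑ k ∈ S.image π, d * g k := by
        gcongr with k
        · exact hg0 k
        · exact hπ k _ fun i hi => (Finset.mem_filter.mp hi).2
    _ ≤ d * ∑' k, g k := by
        rw [← Finset.mul_sum]
        gcongr
        exact hg.sum_le_tsum _ fun k _ => hg0 k

theorem summable_indicator_of_eventually_mem {g : ℕ → ℝ} (hg : ∀ n, 0 ≤ g n) {S T : Set ℕ}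
    (hST : ∀ᶠ n in atTop, n ∈ S → n ∈ T) (hT : Summable (T.indicator g)) :
    Summable (S.indicator g) := by
  refine Summable.of_norm_bounded_eventually_nat hT ?_
  filter_upwards [hST] with n hn
  rw [Real.norm_of_nonneg (Set.indicator_nonneg (fun n _ => hg n) n)]
  exact Set.indicator_apply_le' (fun hS => (Set.indicator_of_mem (hn hS) g).ge)
    fun _ => Set.indicator_nonneg (fun n _ => hg n) n

theorem inv_one_sub_le_exp_two_mul {u : ℝ} (h0 : 0 ≤ u) (h : u ≤ 1 / 2) :
    (1 - u)⁻¹ ≤ Real.exp (2 * u) := by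
  have hu : (1 - u)⁻¹ ≤ 2 * u + 1 := by
    rw [inv_le_iff_one_le_mul₀ (by linarith)]
    nlinarith
  exact hu.trans (Real.add_one_le_exp _)

theorem one_sub_mul_sum_le_sum_filter_not_dvd {α : Type*} [CommMonoid α] {w : α →* ℝ}
    (hw : ∀ a, 0 ≤ w a) {A : Finset α} (hA : ∀ a ∈ A, ∀ b, b ∣ a → b ∈ A) (p : α)
    [DecidablePred (p ∣ ·)] :
    (1 - w p) * ∑ a ∈ A, w a ≤ ∑ a ∈ A with ¬ p ∣ a, w a := by
  classical
  have hsub : A.filter (p ∣ ·) ⊆ A.image (p * ·) := by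
    intro a ha
    obtain ⟨haA, b, rfl⟩ := Finset.mem_filter.mp ha
    exact Finset.mem_image_of_mem _ (hA _ haA b (dvd_mul_left b p))
  have hdvd : ∑ a ∈ A with p ∣ a, w a ≤ w p * ∑ a ∈ A, w a :=
    calc ∑ a ∈ A with p ∣ a, w a ≤ ∑ a ∈ A.image (p * ·), w a :=
          Finset.sum_le_sum_of_subset_of_nonneg hsub fun a _ _ => hw a
      _ ≤ ∑ b ∈ A, w (p * b) := Finset.sum_image_le_of_nonneg fun a _ => hw a
      _ = w p * ∑ a ∈ A, w a := by simp only [map_mul, Finset.mul_sum]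
  linarith [Finset.sum_filter_add_sum_filter_not A (p ∣ ·) w]

theorem sum_le_prod_inv_one_sub {α : Type*} [CommMonoidWithZero α] [WfDvdMonoid α]
    [Subsingleton αˣ] {w : α →* ℝ} (hw : ∀ a, 0 ≤ w a) {S : Finset α} (hS : ∀ p ∈ S, w p < 1)
    {A : Finset α} (hA0 : 0 ∉ A) (hA : ∀ a ∈ A, ∀ b, b ∣ a → b ∈ A)
    (hAS : ∀ a ∈ A, Irreducible a → a ∈ S) :
    ∑ a ∈ A, w a ≤ ∏ p ∈ S, (1 - w p)⁻¹ := by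
  classical
  induction S using Finset.induction_on generalizing A with
  | empty =>
    have hA1 : A ⊆ {1} := by
      intro a ha
      by_contra hne
      obtain ⟨p, hp, hpa⟩ := WfDvdMonoid.exists_irreducible_factor
        (mt isUnit_iff_eq_one.mp (by simpa using hne)) (ne_of_mem_of_not_mem ha hA0)
      exact Finset.notMem_empty p (hAS p (hA a ha p hpa) hp)
    calc ∑ a ∈ A, w a ≤ ∑ a ∈ {1}, w a :=
          Finset.sum_le_sum_of_subset_of_nonneg hA1 fun a _ _ => hw a
      _ = ∏ p ∈ ∅, (1 - w p)⁻¹ := by simp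
  | insert p S hpS ih =>
    have hp : 0 < 1 - w p := sub_pos.mpr (hS p (Finset.mem_insert_self p S))
    have hrec : ∑ a ∈ A with ¬ p ∣ a, w a ≤ ∏ q ∈ S, (1 - w q)⁻¹ := by
      refine ih (fun q hq => hS q (Finset.mem_insert_of_mem hq))
        (fun h => hA0 (Finset.mem_filter.mp h).1) (fun a ha b hb => ?_) (fun q hq hirr => ?_)
      · obtain ⟨haA, hpa⟩ := Finset.mem_filter.mp ha
        exact Finset.mem_filter.mpr ⟨hA a haA b hb, fun h => hpa (h.trans hb)⟩
      · obtain ⟨hqA, hpq⟩ := Finset.mem_filter.mp hq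
        exact Finset.mem_of_mem_insert_of_ne (hAS q hqA hirr) fun h => hpq h.symm.dvd
    rw [Finset.prod_insert hpS, ← div_eq_inv_mul, le_div_iff₀' hp]
    exact (one_sub_mul_sum_le_sum_filter_not_dvd hw hA p).trans hrec

theorem sum_le_exp_two_mul_sum_irreducible {α : Type*} [CommMonoidWithZero α] [WfDvdMonoid α]
    [Subsingleton αˣ] {w : α →* ℝ} (hw : ∀ a, 0 ≤ w a)
    (hw2 : ∀ p, Irreducible p → w p ≤ 1 / 2) {A : Finset α} (hA0 : 0 ∉ A)
    (hA : ∀ a ∈ A, ∀ b, b ∣ a → b ∈ A) [DecidablePred (Irreducible (M := α))] :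
    ∑ a ∈ A, w a ≤ Real.exp (2 * ∑ p ∈ A with Irreducible p, w p) := by
  have hS : ∀ p ∈ A.filter Irreducible, w p ≤ 1 / 2 := fun p hp =>
    hw2 p (Finset.mem_filter.mp hp).2
  calc ∑ a ∈ A, w a ≤ ∏ p ∈ A with Irreducible p, (1 - w p)⁻¹ :=
        sum_le_prod_inv_one_sub hw (fun p hp => (hS p hp).trans_lt one_half_lt_one) hA0 hA
          fun a ha hirr => Finset.mem_filter.mpr ⟨ha, hirr⟩
    _ ≤ ∏ p ∈ A with Irreducible p, Real.exp (2 * w p) :=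
        Finset.prod_le_prod (fun p hp => inv_nonneg.mpr (by linarith [hS p hp]))
          fun p hp => inv_one_sub_le_exp_two_mul (hw p) (hS p hp)
    _ = Real.exp (2 * ∑ p ∈ A with Irreducible p, w p) := by rw [Finset.mul_sum, Real.exp_sum]

theorem finite_setOf_dvd {α : Type*} [CommMonoidWithZero α] [UniqueFactorizationMonoid α]
    [Finite αˣ] {a : α} (ha : a ≠ 0) : {b | b ∣ a}.Finite :=
  let _ := Fintype.ofFinite αˣ
  let _ := UniqueFactorizationMonoid.fintypeSubtypeDvd a ha
  Finite.of_fintype {b // b ∣ a}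

theorem summable_ne_zero_of_summable_irreducible {α : Type*} [CommMonoidWithZero α]
    [UniqueFactorizationMonoid α] [Subsingleton αˣ] {w : α →* ℝ} (hw : ∀ a, 0 ≤ w a)
    (hw2 : ∀ p, Irreducible p → w p ≤ 1 / 2)
    (h : Summable fun p : {p : α // Irreducible p} => w p) :
    Summable fun a : {a : α // a ≠ 0} => w a := by
  classical
  refine summable_of_sum_le
    (c := Real.exp (2 * ∑' p : {p : α // Irreducible p}, w p)) (fun a => hw a) fun U => ?_
  let A := U.biUnion fun a => (finite_setOf_dvd a.2).toFinset
  have hmem {b : α} : b ∈ A ↔ ∃ a ∈ U, b ∣ a.1 := by simp [A]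
  calc ∑ a ∈ U, w a = ∑ a ∈ U.image Subtype.val, w a :=
        (Finset.sum_image Subtype.val_injective.injOn).symm
    _ ≤ ∑ a ∈ A, w a := by
        refine Finset.sum_le_sum_of_subset_of_nonneg (fun b hb => ?_) fun a _ _ => hw a
        obtain ⟨a, ha, rfl⟩ := Finset.mem_image.mp hb
        exact hmem.mpr ⟨a, ha, dvd_rfl⟩
    _ ≤ Real.exp (2 * ∑ p ∈ A with Irreducible p, w p) := by
        refine sum_le_exp_two_mul_sum_irreducible hw hw2 (fun h0 => ?_) fun b hb c hc => ?_
        · obtain ⟨a, -, ha⟩ := hmem.mp h0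
          exact a.2 (zero_dvd_iff.mp ha)
        · obtain ⟨a, ha, hba⟩ := hmem.mp hb
          exact hmem.mpr ⟨a, ha, hc.trans hba⟩
    _ ≤ Real.exp (2 * ∑' p : {p : α // Irreducible p}, w p) := by
        rw [← Finset.sum_subtype_eq_sum_filter]
        gcongr
        exact h.sum_le_tsum _ fun p _ => hw p

/-- The ideals of absolute norm `n`. For `n = p` prime these are the primes of degree one
above `p`. -/
def idealsOfNorm (R : Type*) [CommRing R] [IsDedekindDomain R] [Module.Free ℤ R] (n : ℕ) :
    Set (Ideal R) :=
  {I | absNorm I = n}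

section DegreeOnePrimes

variable (K : Type*) [Field K] [NumberField K]

theorem not_summable_inv_absNorm :
    ¬ Summable fun I : (Ideal (𝓞 K))⁰ => (absNorm (I : Ideal (𝓞 K)) : ℝ)⁻¹ := fun h =>
  NumberField.dedekindZeta_residue_ne_zero K <|
    tendsto_nhds_unique (Ideal.tendsto_norm_le_div_atTop₀ K) <|
      tendsto_card_le_div_atTop_of_summable_inv
        (fun I => Nat.cast_pos.mpr (absNorm_pos_of_nonZeroDivisors I)) h

variable {K} in
theorem two_le_absNorm_of_irreducible {P : Ideal (𝓞 K)} (hP : Irreducible P) :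
    2 ≤ absNorm P :=
  (Nat.two_le_iff _).mpr ⟨absNorm_eq_zero_iff.not.mpr hP.ne_zero,
    absNorm_eq_one_iff.not.mpr fun h => hP.not_isUnit (isUnit_iff.mpr h)⟩

theorem not_summable_inv_absNorm_irreducible :
    ¬ Summable fun P : {P : Ideal (𝓞 K) // Irreducible P} => (absNorm P.1 : ℝ)⁻¹ := by
  intro h
  let w : Ideal (𝓞 K) →* ℝ :=
    { toFun := fun I => (absNorm I : ℝ)⁻¹
      map_one' := by simp
      map_mul' := fun I J => by simp [mul_comm] }
  have hw2 : ∀ P, Irreducible P → w P ≤ 1 / 2 := fun P hP => by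
    rw [one_div]
    exact inv_anti₀ two_pos (by exact_mod_cast two_le_absNorm_of_irreducible hP)
  have hsum : Summable fun I : {I : Ideal (𝓞 K) // I ≠ 0} => w I :=
    summable_ne_zero_of_summable_irreducible (fun I => inv_nonneg.mpr (Nat.cast_nonneg _)) hw2 h
  let e : (Ideal (𝓞 K))⁰ ≃ {I : Ideal (𝓞 K) // I ≠ 0} :=
    Equiv.subtypeEquivRight fun _ => mem_nonZeroDivisors_iff_ne_zero
  exact not_summable_inv_absNorm K (e.summable_iff.mpr hsum)

theorem card_primes_natCast_mem_le_finrank {R : Type*} [CommRing R] [IsDedekindDomain R]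
    [Module.Free ℤ R] [Module.Finite ℤ R] {p : ℕ} (hp : p.Prime) (S : Finset (Ideal R))
    (hS : ∀ P ∈ S, Prime P ∧ (p : R) ∈ P) : S.card ≤ finrank ℤ R := by
  have hdvd : ∏ P ∈ S, P ∣ span {(p : R)} :=
    Finset.prod_primes_dvd _ (fun P hP => (hS P hP).1) fun P hP => by
      rw [dvd_iff_le, span_singleton_le_iff_mem]
      exact (hS P hP).2
  have hle : ∀ P ∈ S, p ≤ absNorm P := by
    intro P hP
    obtain ⟨k, -, hk⟩ := (Nat.dvd_prime_pow hp).mp <|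
      absNorm_span_natCast (S := R) p ▸ absNorm_dvd_absNorm_of_le
        ((span_singleton_le_iff_mem P).mpr (hS P hP).2)
    have hk0 : k ≠ 0 := by
      rintro rfl
      exact (hS P hP).1.not_isUnit (isUnit_iff.mpr (absNorm_eq_one_iff.mp hk))
    exact hk ▸ Nat.le_self_pow hk0 p
  have hpow : p ^ S.card ≤ p ^ finrank ℤ R :=
    calc p ^ S.card ≤ ∏ P ∈ S, absNorm P := Finset.pow_card_le_prod _ _ _ hle
      _ = absNorm (∏ P ∈ S, P) := (map_prod absNorm _ _).symm
      _ ≤ absNorm (span {(p : R)}) := by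
        refine Nat.le_of_dvd ?_ (map_dvd absNorm hdvd)
        rw [absNorm_span_natCast]
        exact pow_pos hp.pos _
      _ = p ^ finrank ℤ R := absNorm_span_natCast p
  exact (Nat.pow_le_pow_iff_right hp.one_lt).mp hpow

theorem not_summable_inv_prime_idealsOfNorm_nonempty :
    ¬ Summable ({p | p.Prime ∧ (idealsOfNorm (𝓞 K) p).Nonempty}.indicator
      fun p : ℕ => (p : ℝ)⁻¹) := by
  set T := {p | p.Prime ∧ (idealsOfNorm (𝓞 K) p).Nonempty}
  intro hT
  let g (p : ℕ) : ℝ := T.indicator (fun p => (p : ℝ)⁻¹) p + ((p : ℝ) ^ 2)⁻¹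
  have hind (p : ℕ) : 0 ≤ T.indicator (fun p : ℕ => (p : ℝ)⁻¹) p :=
    Set.indicator_nonneg (fun p _ => by positivity) p
  have hg0 (p : ℕ) : 0 ≤ g p := add_nonneg (hind p) (by positivity)
  have hg : Summable g := hT.add (Real.summable_nat_pow_inv.mpr one_lt_two)
  have hprime (P : {P : Ideal (𝓞 K) // Irreducible P}) :
      ∃ p : ℕ, p.Prime ∧ (p : 𝓞 K) ∈ P.1 ∧ (absNorm P.1 : ℝ)⁻¹ ≤ g p := by
    have : P.1.IsMaximal := (isPrime_of_prime P.2.prime).isMaximal P.2.ne_zero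
    obtain ⟨p, n, hn, hpP, hp, hnorm⟩ := Ideal.exists_prime_and_absNorm_eq_pow P.1
    refine ⟨p, hp, hpP, ?_⟩
    obtain rfl | hn2 : n = 1 ∨ 2 ≤ n := by lia
    · have hpT : p ∈ T := ⟨hp, P.1, by simpa [idealsOfNorm] using hnorm⟩
      simp only [g, hnorm, pow_one, Set.indicator_of_mem hpT]
      exact le_add_of_nonneg_right (by positivity)
    · refine le_add_of_nonneg_of_le (hind p) ?_
      rw [hnorm, Nat.cast_pow]
      exact inv_anti₀ (pow_pos (Nat.cast_pos.mpr hp.pos) 2)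
        (pow_le_pow_right₀ (Nat.one_le_cast.mpr hp.one_le) hn2)
  choose π hπ hmem hle using hprime
  refine not_summable_inv_absNorm_irreducible K <| Summable.of_nonneg_of_le
    (fun P => by positivity) hle <|
    summable_comp_of_card_fiber_le (d := finrank ℤ (𝓞 K)) hg hg0 fun p S hS => ?_
  obtain rfl | ⟨P₀, hP₀⟩ := S.eq_empty_or_nonempty
  · simp
  · rw [← Finset.card_map (Function.Embedding.subtype _)]
    refine card_primes_natCast_mem_le_finrank (hS P₀ hP₀ ▸ hπ P₀) _ fun P hP => ?_
    obtain ⟨Q, hQ, rfl⟩ := Finset.mem_map.mp hP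
    exact ⟨Q.2.prime, hS Q hQ ▸ hmem Q⟩

end DegreeOnePrimes

section Counting

theorem exists_card_ideals_le_mul (K : Type*) [Field K] [NumberField K] :
    ∃ C : ℝ, ∀ N : ℕ, 0 < N → ∀ W : Finset (Ideal (𝓞 K)), (∀ I ∈ W, absNorm I ≤ N) →
      (W.card : ℝ) ≤ C * N := by
  obtain ⟨C, hC⟩ := ((Ideal.tendsto_norm_le_div_atTop K).comp
    tendsto_natCast_atTop_atTop).bddAbove_range
  refine ⟨C, fun N hN W hW => ?_⟩
  have hbound : (Nat.card {I : Ideal (𝓞 K) // absNorm I ≤ N} : ℝ) / N ≤ C := by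
    simpa only [Function.comp_apply, Nat.cast_le] using hC ⟨N, rfl⟩
  have : Finite {I : Ideal (𝓞 K) // absNorm I ≤ N} :=
    (Ideal.finite_setOfPred_absNorm_le (S := 𝓞 K) N).to_subtype
  have hcard : W.card ≤ Nat.card {I : Ideal (𝓞 K) // absNorm I ≤ N} := by
    rw [← Nat.card_eq_finsetCard]
    exact Nat.card_le_card_of_injective (Subtype.map id hW)
      (Subtype.map_injective hW Function.injective_id)
  exact (Nat.cast_le.mpr hcard).trans ((div_le_iff₀ (Nat.cast_pos.mpr hN)).mp hbound)

theorem summable_indicator_inv_of_sum_div_le {T : Set ℕ} {C : ℝ} (hT : 0 ∉ T)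
    (h : ∀ F : Finset ℕ, ↑F ⊆ T → ∀ N : ℕ, 0 < N → ∑ p ∈ F, ((N / p : ℕ) : ℝ) ≤ C * N) :
    Summable (T.indicator fun p : ℕ => (p : ℝ)⁻¹) := by
  classical
  refine summable_of_sum_le (c := C)
    (Set.indicator_nonneg fun p _ => by positivity) fun F => ?_
  rw [Finset.sum_indicator_eq_sum_filter (t := fun _ => T)]
  set F' := F.filter (· ∈ T)
  have hF' : ↑F' ⊆ T := fun p hp => (Finset.mem_filter.mp hp).2
  have hne : ∀ p ∈ F', p ≠ 0 := fun p hp => ne_of_mem_of_not_mem (hF' hp) hT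
  -- For this `N` the truncated quotients `N / p` are exact.
  let N := ∏ p ∈ F', p
  have hN : 0 < N := Finset.prod_pos fun p hp => Nat.pos_of_ne_zero (hne p hp)
  refine le_of_mul_le_mul_left ?_ (Nat.cast_pos (α := ℝ).mpr hN)
  calc (N : ℝ) * ∑ p ∈ F', (p : ℝ)⁻¹ = ∑ p ∈ F', ((N / p : ℕ) : ℝ) := by
        rw [Finset.mul_sum]
        refine Finset.sum_congr rfl fun p hp => ?_
        rw [Nat.cast_div (Finset.dvd_prod_of_mem _ hp) (Nat.cast_ne_zero.mpr (hne p hp)),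
          div_eq_mul_inv]
    _ ≤ N * C := (h F' hF' N hN).trans_eq (mul_comm _ _)

variable {R : Type*} [CommRing R] [IsDedekindDomain R] [Module.Free ℤ R]

/-- The value at `n` of the completely multiplicative extension of a choice `P` of one ideal for
each prime number. If `P p` has norm `p` for all `p ∣ n`, it is an ideal of norm `n`. -/
def idealOfNat (P : ℕ → Ideal R) (n : ℕ) : Ideal R :=
  (n.primeFactorsList.map P).prod

theorem absNorm_idealOfNat {P : ℕ → Ideal R} {n : ℕ} (hn : n ≠ 0)
    (hP : ∀ p ∈ n.primeFactorsList, absNorm (P p) = p) : absNorm (idealOfNat P n) = n := by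
  rw [idealOfNat, map_list_prod, List.map_map,
    List.map_congr_left (f := absNorm ∘ P) (g := id) hP, List.map_id, Nat.prod_primeFactorsList hn]

theorem eq_of_dvd_of_prime_absNorm {I J : Ideal R} (hI : (absNorm I).Prime)
    (hJ : (absNorm J).Prime) (h : I ∣ J) : I = J :=
  associated_iff_eq.mp <| ((irreducible_of_irreducible_absNorm hI).dvd_irreducible_iff_associated
    (irreducible_of_irreducible_absNorm hJ)).mp h

theorem eq_of_dvd_idealOfNat {P : ℕ → Ideal R} {n p : ℕ}
    (hP : ∀ q ∈ n.primeFactorsList, absNorm (P q) = q) (hp : p.Prime) {I : Ideal R}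
    (hI : absNorm I = p) (h : I ∣ idealOfNat P n) : I = P p := by
  have hIp : (absNorm I).Prime := hI ▸ hp
  obtain ⟨_, hJ, hIJ⟩ := (irreducible_of_irreducible_absNorm hIp).prime.dvd_prod_iff.mp h
  obtain ⟨q, hq, rfl⟩ := List.mem_map.mp hJ
  have heq : I = P q :=
    eq_of_dvd_of_prime_absNorm hIp ((hP q hq).symm ▸ Nat.prime_of_mem_primeFactorsList hq) hIJ
  rw [← hI, heq, hP q hq]

theorem injOn_mul_idealOfNat {P Q : ℕ → Ideal R} {T : Set ℕ}
    (hQ : ∀ p ∈ T, p.Prime ∧ absNorm (Q p) = p ∧ Q p ≠ P p) :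
    Set.InjOn (fun x : ℕ × ℕ => Q x.1 * idealOfNat P x.2)
      (T ×ˢ {n | n ≠ 0 ∧ ∀ q ∈ n.primeFactorsList, absNorm (P q) = q}) := by
  rintro ⟨p, n⟩ ⟨hp, hn, hPn⟩ ⟨p', n'⟩ ⟨hp', hn', hPn'⟩ (h : Q p * _ = Q p' * _)
  obtain ⟨hpp, hQp, hne⟩ := hQ p hp
  obtain ⟨hpp', hQp', -⟩ := hQ p' hp'
  have hQp_prime : (absNorm (Q p)).Prime := hQp.symm ▸ hpp
  obtain rfl : p = p' := by
    rcases (irreducible_of_irreducible_absNorm hQp_prime).prime.dvd_or_dvd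
      (h ▸ dvd_mul_right (Q p) (idealOfNat P n)) with hdvd | hdvd
    · rw [← hQp, ← hQp', eq_of_dvd_of_prime_absNorm hQp_prime (hQp'.symm ▸ hpp') hdvd]
    · exact absurd (eq_of_dvd_idealOfNat hPn' hpp hQp hdvd) hne
  have hnorm := congrArg absNorm h
  rw [map_mul, map_mul, hQp, absNorm_idealOfNat hn hPn, absNorm_idealOfNat hn' hPn'] at hnorm
  exact congrArg (Prod.mk p) (Nat.eq_of_mul_eq_mul_left hpp.pos hnorm)

theorem not_dvd_of_mem_primeFactorsList_mul_add_one {m j q : ℕ}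
    (hq : q ∈ (m * j + 1).primeFactorsList) : ¬ q ∣ m := fun h =>
  (Nat.prime_of_mem_primeFactorsList hq).one_lt.ne' <| Nat.dvd_one.mp <|
    (Nat.dvd_add_right (h.mul_right j)).mp (Nat.dvd_of_mem_primeFactorsList hq)

variable {K : Type*} [Field K] [NumberField K]

theorem summable_indicator_inv_of_injOn_of_absNorm_le {T : Set ℕ} (hT : 0 ∉ T) {m : ℕ}
    (hm : m ≠ 0) {I : ℕ × ℕ → Ideal (𝓞 K)} (hinj : Set.InjOn I (T ×ˢ Set.univ))
    (hnorm : ∀ p ∈ T, ∀ j, absNorm (I (p, j)) ≤ m * ((j + 1) * p)) :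
    Summable (T.indicator fun p : ℕ => (p : ℝ)⁻¹) := by
  classical
  obtain ⟨C, hC⟩ := exists_card_ideals_le_mul K
  refine summable_indicator_inv_of_sum_div_le (C := C * m) hT fun F hF N hN => ?_
  let pairs : Finset (ℕ × ℕ) := F.biUnion fun p => (Finset.range (N / p)).map (.sectR p ℕ)
  have hmem {p j : ℕ} : (p, j) ∈ pairs ↔ p ∈ F ∧ j < N / p := by simp [pairs]
  have hsub : (pairs : Set (ℕ × ℕ)) ⊆ T ×ˢ Set.univ := fun x hx =>
    ⟨hF (hmem.mp hx).1, Set.mem_univ _⟩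
  have hcard : pairs.card = ∑ p ∈ F, N / p := by
    rw [Finset.card_biUnion]
    · simp
    · intro p _ q _ hpq
      simp [Finset.disjoint_left, hpq.symm]
  have hbound : ∀ J ∈ pairs.image I, absNorm J ≤ m * N := by
    intro J hJ
    obtain ⟨⟨p, j⟩, hx, rfl⟩ := Finset.mem_image.mp hJ
    obtain ⟨hp, hj⟩ := hmem.mp hx
    exact (hnorm p (hF hp) j).trans
      (Nat.mul_le_mul_left m (Nat.mul_le_of_le_div _ _ _ hj))
  calc ∑ p ∈ F, ((N / p : ℕ) : ℝ) = (pairs.image I).card := by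
        rw [Finset.card_image_of_injOn (hinj.mono hsub), hcard, Nat.cast_sum]
    _ ≤ C * (m * N : ℕ) := hC _ (by positivity) _ hbound
    _ = C * m * N := by rw [Nat.cast_mul, mul_assoc]

theorem summable_indicator_inv_of_forall_absNorm_eq {P Q : ℕ → Ideal (𝓞 K)} {T : Set ℕ} {m : ℕ}
    (hm : m ≠ 0) (hP : ∀ p, p.Prime → ¬ p ∣ m → absNorm (P p) = p)
    (hQ : ∀ p ∈ T, p.Prime ∧ absNorm (Q p) = p ∧ Q p ≠ P p) :
    Summable (T.indicator fun p : ℕ => (p : ℝ)⁻¹) := by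
  have hPm (j : ℕ) : ∀ q ∈ (m * j + 1).primeFactorsList, absNorm (P q) = q := fun q hq =>
    hP q (Nat.prime_of_mem_primeFactorsList hq) (not_dvd_of_mem_primeFactorsList_mul_add_one hq)
  have hpair : Function.Injective (Prod.map id fun j => m * j + 1 : ℕ × ℕ → ℕ × ℕ) :=
    Function.injective_id.prodMap fun j j' h =>
      Nat.eq_of_mul_eq_mul_left (Nat.pos_of_ne_zero hm) (Nat.add_right_cancel h)
  refine summable_indicator_inv_of_injOn_of_absNorm_le
    (fun h => Nat.not_prime_zero (hQ 0 h).1) hm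
    ((injOn_mul_idealOfNat hQ).comp hpair.injOn fun x hx =>
      ⟨hx.1, Nat.succ_ne_zero _, hPm x.2⟩) fun p hp j => ?_
  calc absNorm (Q p * idealOfNat P (m * j + 1)) = p * (m * j + 1) := by
        rw [map_mul, (hQ p hp).2.1, absNorm_idealOfNat (Nat.succ_ne_zero _) (hPm j)]
    _ ≤ p * (m * (j + 1)) := by gcongr; lia
    _ = m * ((j + 1) * p) := by ring

theorem summable_inv_prime_idealsOfNorm_nontrivial
    (h : ∀ᶠ p : ℕ in atTop, p.Prime → (idealsOfNorm (𝓞 K) p).Nonempty) :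
    Summable ({p | p.Prime ∧ (idealsOfNorm (𝓞 K) p).Nontrivial}.indicator
      fun p : ℕ => (p : ℝ)⁻¹) := by
  obtain ⟨M, hM⟩ := eventually_atTop.mp h
  have hnonempty (p : ℕ) (hp : p.Prime) (hpM : ¬ p ∣ M.factorial) :
      (idealsOfNorm (𝓞 K) p).Nonempty :=
    hM p (not_le.mp (hp.dvd_factorial.not.mp hpM)).le hp
  choose! P hP using hnonempty
  have hother (p : ℕ) (hp : p ∈ {p | p.Prime ∧ (idealsOfNorm (𝓞 K) p).Nontrivial}) :
      ∃ I ∈ idealsOfNorm (𝓞 K) p, I ≠ P p :=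
    hp.2.exists_ne (P p)
  choose! Q hQ hne using hother
  exact summable_indicator_inv_of_forall_absNorm_eq M.factorial_ne_zero hP
    fun p hp => ⟨hp.1, hQ p hp, hne p hp⟩

end Counting

section KummerDedekind

variable {K : Type*} [Field K] [NumberField K] {θ : 𝓞 K}

theorem exponent_ne_zero_of_adjoin_eq_top (hθ : Algebra.adjoin ℚ {(θ : K)} = ⊤) :
    RingOfIntegers.exponent θ ≠ 0 := by
  have hder : aeval θ (derivative (minpoly ℤ θ)) ≠ 0 := fun h => by
    have hsep := (minpoly.irreducible (Algebra.IsIntegral.isIntegral (R := ℚ) (θ : K))).separable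
    refine hsep.aeval_derivative_ne_zero (minpoly.aeval ℚ (θ : K)) ?_
    rw [minpoly.isIntegrallyClosed_eq_field_fractions' ℚ θ.isIntegral_coe, derivative_map,
      aeval_map_algebraMap, RingOfIntegers.minpoly_coe]
    simpa [aeval_algebraMap_apply] using congrArg (algebraMap (𝓞 K) K) h
  have hcond : conductor ℤ θ ≠ ⊥ := by
    intro h
    have := conductor_mul_differentIdeal ℤ ℚ K θ hθ
    rw [h, Ideal.bot_mul, eq_comm, span_singleton_eq_bot] at this
    exact hder this
  exact absNorm_eq_zero_iff.not.mpr (IsIntegral.comap_ne_bot ℤ hcond)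

theorem nonempty_roots_embedding_idealsOfNorm {p : ℕ} (hp : p.Prime)
    (hpθ : ¬ p ∣ RingOfIntegers.exponent θ) :
    Nonempty ({x : ZMod p | aeval x (minpoly ℤ θ) = 0} ↪ idealsOfNorm (𝓞 K) p) := by
  have : Fact p.Prime := ⟨hp⟩
  set g := (minpoly ℤ θ).map (Int.castRingHom (ZMod p))
  have hg : g ≠ 0 := map_monic_ne_zero (minpoly.monic θ.isIntegral)
  have hfactor (x : {x : ZMod p | aeval x (minpoly ℤ θ) = 0}) :
      X - C x.1 ∈ RingOfIntegers.monicFactorsMod θ p := by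
    rw [Multiset.mem_toFinset, Polynomial.mem_normalizedFactors_iff hg]
    refine ⟨irreducible_X_sub_C _, monic_X_sub_C _, dvd_iff_isRoot.mpr ?_⟩
    rw [IsRoot, eval_map]
    exact x.2
  let e := NumberField.Ideal.primesOverSpanEquivMonicFactorsMod hpθ
  let P (x : {x : ZMod p | aeval x (minpoly ℤ θ) = 0}) : Ideal (𝓞 K) := e.symm ⟨_, hfactor x⟩
  have hnorm (x) : P x ∈ idealsOfNorm (𝓞 K) p := by
    have : (P x).IsPrime := (e.symm ⟨_, hfactor x⟩).2.1
    have : (P x).LiesOver (span {(p : ℤ)}) := (e.symm ⟨_, hfactor x⟩).2.2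
    have hdeg :=
      NumberField.Ideal.inertiaDeg_primesOverSpanEquivMonicFactorsMod_symm_apply' hpθ (hfactor x)
    rw [natDegree_X_sub_C] at hdeg
    have := Ideal.natAbs_pow_inertiaDeg p (P x)
    rw [hdeg, pow_one, Int.natAbs_natCast] at this
    exact this.symm
  refine ⟨⟨fun x => ⟨P x, hnorm x⟩, fun x y h => ?_⟩⟩
  have := e.symm.injective (Subtype.ext (Subtype.mk.inj h))
  simpa [Subtype.ext_iff] using this


theorem eventually_nonempty_roots_embedding_idealsOfNorm
    (hθ : Algebra.adjoin ℚ {(θ : K)} = ⊤) :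
    ∀ᶠ p : ℕ in atTop, p.Prime →
      Nonempty ({x : ZMod p | aeval x (minpoly ℤ θ) = 0} ↪ idealsOfNorm (𝓞 K) p) := by
  filter_upwards [eventually_gt_atTop (RingOfIntegers.exponent θ)] with p hp hprime
  exact nonempty_roots_embedding_idealsOfNorm hprime <|
    Nat.not_dvd_of_pos_of_lt (Nat.pos_of_ne_zero (exponent_ne_zero_of_adjoin_eq_top hθ)) hp

end KummerDedekind

section Roots

variable {f : ℤ[X]}

theorem minpoly_eq_of_irreducible_of_monic_of_aeval_eq_zero {S : Type*} [CommRing S]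
    [IsDomain S] [CharZero S] (hmonic : f.Monic) (hirr : Irreducible f) {θ : S}
    (hθ : aeval θ f = 0) : minpoly ℤ θ = f := by
  have hint : IsIntegral ℤ θ := ⟨f, hmonic, hθ⟩
  exact eq_of_monic_of_associated (minpoly.monic hint) hmonic <|
    (minpoly.irreducible hint).associated_of_dvd hirr (minpoly.isIntegrallyClosed_dvd hint hθ)

theorem exists_ringOfIntegers_aeval_eq_zero {K : Type*} [Field K] (hmonic : f.Monic) {x : K}
    (hx : aeval x f = 0) : ∃ θ : 𝓞 K, (θ : K) = x ∧ aeval θ f = 0 := by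
  obtain ⟨θ, rfl⟩ : ∃ θ : 𝓞 K, (θ : K) = x := ⟨⟨x, f, hmonic, hx⟩, rfl⟩
  refine ⟨θ, rfl, RingOfIntegers.coe_injective ?_⟩
  rw [map_zero, ← aeval_algebraMap_apply, hx]

theorem exists_numberField_adjoin_eq_top_of_irreducible (hmonic : f.Monic)
    (hirr : Irreducible f) :
    ∃ (K : Type) (_ : Field K) (_ : NumberField K) (θ : 𝓞 K),
      Algebra.adjoin ℚ {(θ : K)} = ⊤ ∧ minpoly ℤ θ = f := by
  have hirrQ : Irreducible (f.map (algebraMap ℤ ℚ)) :=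
    hmonic.irreducible_iff_irreducible_map_fraction_map.mp hirr
  have : Fact (Irreducible (f.map (algebraMap ℤ ℚ))) := ⟨hirrQ⟩
  let K := AdjoinRoot (f.map (algebraMap ℤ ℚ))
  have hroot : aeval (AdjoinRoot.root (f.map (algebraMap ℤ ℚ))) f = 0 := by
    rw [← aeval_map_algebraMap ℚ]
    exact AdjoinRoot.eval₂_root _
  have : CharZero K := charZero_of_injective_algebraMap (algebraMap ℚ K).injective
  have : FiniteDimensional ℚ K := (AdjoinRoot.powerBasis hirrQ.ne_zero).finite
  have : NumberField K := { }
  obtain ⟨θ, hθ, hθf⟩ := exists_ringOfIntegers_aeval_eq_zero hmonic hroot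
  refine ⟨K, inferInstance, this, θ, ?_,
    minpoly_eq_of_irreducible_of_monic_of_aeval_eq_zero hmonic hirr hθf⟩
  rw [hθ]
  exact AdjoinRoot.adjoinRoot_eq_top

theorem exists_numberField_splits (g : ℚ[X]) :
    ∃ (L : Type) (_ : Field L) (_ : NumberField L), (g.map (algebraMap ℚ L)).Splits :=
  ⟨g.SplittingField, inferInstance, { to_charZero := inferInstance }, SplittingField.splits g⟩

theorem exists_ringHom_zmod_ker_eq {R : Type*} [CommRing R] [IsDedekindDomain R]
    [Module.Free ℤ R] {p : ℕ} (hp : p.Prime) {I : Ideal R} (hI : absNorm I = p) :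
    ∃ φ : R →+* ZMod p, RingHom.ker φ = I := by
  have hcard : Nat.card (R ⧸ I) = p := by
    rw [← hI, absNorm_apply, Submodule.cardQuot_apply]
  have : Finite (R ⧸ I) := Nat.finite_of_card_ne_zero (hcard ▸ hp.ne_zero)
  let _ := Fintype.ofFinite (R ⧸ I)
  let e := ZMod.ringEquivOfPrime (R ⧸ I) hp (Nat.card_eq_fintype_card.symm.trans hcard)
  refine ⟨e.symm.toRingHom.comp (Ideal.Quotient.mk I), ?_⟩
  ext x
  simp [RingHom.mem_ker, Ideal.Quotient.eq_zero_iff_mem]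

variable {R : Type*} [CommRing R] [IsDedekindDomain R] [Module.Free ℤ R] [Module.Finite ℤ R]

theorem eventually_nontrivial_roots_zmod_of_aeval_eq_zero {α β : R}
    (hα : aeval α f = 0) (hβ : aeval β f = 0) (hαβ : α ≠ β) :
    ∀ᶠ p : ℕ in atTop, p.Prime → (idealsOfNorm R p).Nonempty →
      {x : ZMod p | aeval x f = 0}.Nontrivial := by
  have hnorm : 0 < (Algebra.norm ℤ (α - β)).natAbs :=
    Int.natAbs_pos.mpr (Algebra.norm_ne_zero_iff.mpr (sub_ne_zero.mpr hαβ))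
  filter_upwards [eventually_gt_atTop (Algebra.norm ℤ (α - β)).natAbs] with p hp hprime ⟨I, hI⟩
  obtain ⟨φ, hφ⟩ := exists_ringHom_zmod_ker_eq hprime hI
  have hroot {γ : R} (hγ : aeval γ f = 0) : aeval (φ γ) f = 0 := by
    rw [← φ.toIntAlgHom_apply, aeval_algHom_apply, hγ, map_zero]
  refine ⟨φ α, hroot hα, φ β, hroot hβ, fun h => ?_⟩
  have hmem : α - β ∈ I := hφ ▸ RingHom.sub_mem_ker_iff φ |>.mpr h
  have hdvd := Int.natCast_dvd.mp (absNorm_dvd_norm_of_mem hmem)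
  rw [Set.mem_ofPred.mp hI] at hdvd
  exact Nat.not_dvd_of_pos_of_lt hnorm hp hdvd

theorem exists_ne_aeval_eq_zero_of_splits {L : Type*} [Field L] [NumberField L]
    (hmonic : f.Monic) (hirr : Irreducible f) (hdeg : 1 < f.natDegree)
    (hsplits : ((f.map (algebraMap ℤ ℚ)).map (algebraMap ℚ L)).Splits) :
    ∃ α β : 𝓞 L, aeval α f = 0 ∧ aeval β f = 0 ∧ α ≠ β := by
  classical
  set g := f.map (algebraMap ℤ ℚ)
  have hsep : g.Separable :=
    (hmonic.irreducible_iff_irreducible_map_fraction_map.mp hirr).separable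
  have hcard : 1 < Fintype.card (g.rootSet L) := by
    rwa [card_rootSet_eq_natDegree hsep hsplits, hmonic.natDegree_map]
  have hintegral (x : g.rootSet L) : ∃ γ : 𝓞 L, (γ : L) = x ∧ aeval γ f = 0 := by
    refine exists_ringOfIntegers_aeval_eq_zero hmonic ?_
    rw [← aeval_map_algebraMap ℚ]
    exact aeval_eq_zero_of_mem_rootSet x.2
  obtain ⟨x, y, hxy⟩ := Fintype.one_lt_card_iff.mp hcard
  obtain ⟨α, hαx, hα⟩ := hintegral x
  obtain ⟨β, hβy, hβ⟩ := hintegral y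
  exact ⟨α, β, hα, hβ, fun h => hxy <| Subtype.ext <| by rw [← hαx, ← hβy, h]⟩

end Roots

theorem stmt_2_general {f : ℤ[X]} (hmonic : f.Monic) (hirr : Irreducible f)
    (h : ∀ᶠ p : ℕ in atTop, p.Prime → ∃ x : ZMod p, aeval x f = 0) : f.natDegree = 1 := by
  have hdeg : f.natDegree ≠ 0 := fun h0 =>
    hirr.ne_one (eq_one_of_monic_natDegree_zero hmonic h0)
  by_contra hne
  obtain ⟨K, _, _, θ, hθ, rfl⟩ := exists_numberField_adjoin_eq_top_of_irreducible hmonic hirr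
  obtain ⟨L, _, _, hsplits⟩ :=
    exists_numberField_splits ((minpoly ℤ θ).map (algebraMap ℤ ℚ))
  obtain ⟨α, β, hα, hβ, hαβ⟩ := exists_ne_aeval_eq_zero_of_splits hmonic hirr (by lia) hsplits
  have hK := eventually_nonempty_roots_embedding_idealsOfNorm hθ
  have hL := eventually_nontrivial_roots_zmod_of_aeval_eq_zero hα hβ hαβ
  have hsum := summable_inv_prime_idealsOfNorm_nontrivial (K := K) <| by
    filter_upwards [h, hK] with p hroot hembed hp
    obtain ⟨x, hx⟩ := hroot hp
    obtain ⟨ι⟩ := hembed hp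
    exact ⟨_, (ι ⟨x, hx⟩).2⟩
  refine not_summable_inv_prime_idealsOfNorm_nonempty L <|
    summable_indicator_of_eventually_mem (fun p => by positivity) ?_ hsum
  filter_upwards [hK, hL] with p hembed hnontrivial ⟨hp, hI⟩
  obtain ⟨x, hx, y, hy, hxy⟩ := hnontrivial hp hI
  obtain ⟨ι⟩ := hembed hp
  exact ⟨hp, _, (ι ⟨x, hx⟩).2, _, (ι ⟨y, hy⟩).2, fun h => hxy <|
    Subtype.mk.inj (ι.injective (Subtype.ext h))⟩

/-- A monic irreducible integer polynomial with a root modulo every prime has degree 1.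
(Cassels–Fröhlich, p. 362, Ex. 6.2.) -/
theorem stmt_2 (f : Polynomial ℤ) (hmonic : f.Monic) (hirr : Irreducible f)
    (h : ∀ (p : ℕ), p.Prime → ∃ x : ZMod p, Polynomial.aeval x f = 0) :
    f.natDegree = 1 :=
  stmt_2_general hmonic hirr (.of_forall h)
end
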